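/- Let p, q, r, b, c, d ∈ ℂ, set a = (3pd + 4q)/5, and let z₁, …, z₅ be the roots with multiplicity of X⁵ + pX² + qX + r over ℂ. Then five times the coefficient of Y³ in T(Y) = ∏ᵢ₌₁⁵ (Y + zᵢ⁴ + d·zᵢ³ + c·zᵢ² + b·zᵢ + a) equals 15pbc + 20qbd + 25rb + 10qc² + 25rcd − 15p²c − 3p²d² − 23pqd − 2q² − 20rp. -/

import Mathlib

/-!
The coefficient of `Y³` is the second elementary symmetric function `e₂` of the values `wᵢ = g(zᵢ)`
of the subsidiary quartic `g` at the roots, and `2 e₂ = (∑ wᵢ)² - ∑ wᵢ²`. Both sums are linear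
combinations of the power sums of the roots: those of exponent at most `4` come from Newton's
identities, those of exponent `5` to `8` from summing `zᵏ f(z) = 0` over the roots `z` of the
quintic `f`. The value of `a` is the one that makes `∑ wᵢ` vanish, so only `∑ wᵢ²` contributes.
-/

open Polynomial

/-- The Tschirnhaus transform `T(Y) = ∏ᵢ (Y + zᵢ⁴ + d·zᵢ³ + c·zᵢ² + b·zᵢ + a)`
of a quintic with roots `z₁, …, z₅`, given by the quartic subsidiary
equation `z⁴ + dz³ + cz² + bz + a + y = 0`. -/
noncomputable def bringQuinticTransform (a b c d z₁ z₂ z₃ z₄ z₅ : ℂ) :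
    Polynomial ℂ :=
  (X + C (z₁ ^ 4 + d * z₁ ^ 3 + c * z₁ ^ 2 + b * z₁ + a)) *
  (X + C (z₂ ^ 4 + d * z₂ ^ 3 + c * z₂ ^ 2 + b * z₂ + a)) *
  (X + C (z₃ ^ 4 + d * z₃ ^ 3 + c * z₃ ^ 2 + b * z₃ + a)) *
  (X + C (z₄ ^ 4 + d * z₄ ^ 3 + c * z₄ ^ 2 + b * z₄ + a)) *
  (X + C (z₅ ^ 4 + d * z₅ ^ 3 + c * z₅ ^ 2 + b * z₅ + a))

section PowerSums

variable {R : Type*} [CommSemiring R]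

/-- The power sum `∑ zᵏ` over a multiset `s`, counted with multiplicity; it is the value at `s` of
the symmetric polynomial `MvPolynomial.psum`. -/
def powerSum (s : Multiset R) (k : ℕ) : R :=
  (s.map (· ^ k)).sum

theorem powerSum_zero (s : Multiset R) : powerSum s 0 = s.card := by
  simp [powerSum]

theorem powerSum_one (s : Multiset R) : powerSum s 1 = s.sum := by
  simp [powerSum]

theorem aeval_psum_eq_powerSum {σ S : Type*} [Fintype σ] [CommSemiring S] [Algebra S R]
    (f : σ → R) (k : ℕ) :
    MvPolynomial.aeval f (MvPolynomial.psum σ S k) = powerSum (Finset.univ.val.map f) k := by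
  simp only [MvPolynomial.psum, map_sum, map_pow, MvPolynomial.aeval_X, powerSum, Multiset.map_map]
  rfl

theorem sum_map_eval (s : Multiset R) {g : R[X]} {n : ℕ} (hg : g.natDegree < n) :
    (s.map fun z ↦ g.eval z).sum = ∑ i ∈ Finset.range n, g.coeff i * powerSum s i := by
  simp only [eval_eq_sum_range' hg, Multiset.sum_map_sum, Multiset.sum_map_mul_left, powerSum]

theorem sum_map_eval_mul (s : Multiset R) {g h : R[X]} {m n : ℕ} (hg : g.natDegree < m)
    (hh : h.natDegree < n) :
    (s.map fun z ↦ g.eval z * h.eval z).sum =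
      ∑ i ∈ Finset.range m, ∑ j ∈ Finset.range n, g.coeff i * h.coeff j * powerSum s (i + j) := by
  simp only [eval_eq_sum_range' hg, eval_eq_sum_range' hh, Finset.sum_mul_sum,
    Multiset.sum_map_sum, powerSum, ← Multiset.sum_map_mul_left, pow_add, mul_mul_mul_comm]

theorem sum_coeff_mul_powerSum_add {s : Multiset R} {f : R[X]} {n : ℕ} (hf : f.natDegree < n)
    (hs : ∀ z ∈ s, f.IsRoot z) (k : ℕ) :
    ∑ i ∈ Finset.range n, f.coeff i * powerSum s (k + i) = 0 := by
  calc ∑ i ∈ Finset.range n, f.coeff i * powerSum s (k + i)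
      = (s.map fun z ↦ z ^ k * f.eval z).sum := by
        simp only [eval_eq_sum_range' hf, Finset.mul_sum, Multiset.sum_map_sum, powerSum,
          ← Multiset.sum_map_mul_left, pow_add, mul_left_comm]
    _ = (s.map fun _ ↦ (0 : R)).sum := by
        rw [Multiset.map_congr rfl fun z hz ↦ by rw [(hs z hz).eq_zero, mul_zero]]
    _ = 0 := Multiset.sum_map_zero

end PowerSums

section Newton

variable {R : Type*} [CommRing R]

theorem powerSum_eq_mul_esymm_sub_sum (s : Multiset R) {k : ℕ} (hk : 0 < k) :
    powerSum s k = (-1) ^ (k + 1) * k * s.esymm k -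
      ∑ i ∈ Finset.Ico 1 k, (-1) ^ i * s.esymm i * powerSum s (k - i) := by
  classical
  have Ico_eq : {i ∈ Finset.range k.succ | i ∈ Set.Ioo 0 k} = Finset.Ico 1 k := by
    ext i
    simp only [Finset.mem_filter, Finset.mem_range, Set.mem_Ioo, Finset.mem_Ico]
    lia
  have newton := congrArg (MvPolynomial.aeval fun i : s ↦ (i : R))
    (MvPolynomial.psum_eq_mul_esymm_sub_sum s ℤ k hk)
  simp only [map_sub, map_mul, map_pow, map_neg, map_one, map_natCast, map_sum,
    aeval_psum_eq_powerSum, MvPolynomial.aeval_esymm_eq_multiset_esymm, s.map_univ_coe] at newton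
  rwa [Finset.sum_filter, Finset.Nat.sum_antidiagonal_eq_sum_range_succ_mk, ← Finset.sum_filter,
    Ico_eq] at newton

theorem two_mul_esymm_two (s : Multiset R) :
    2 * s.esymm 2 = s.sum ^ 2 - powerSum s 2 := by
  have esymm_one : s.esymm 1 = s.sum := by
    simpa [powerSum_one] using (powerSum_eq_mul_esymm_sub_sum s one_pos).symm
  have Ico_eq : Finset.Ico 1 2 = {1} := rfl
  have newton_two : powerSum s 2 = -(2 * s.esymm 2) + s.sum * s.sum := by
    simpa [pow_succ, powerSum_one, esymm_one, Ico_eq] using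
      powerSum_eq_mul_esymm_sub_sum s two_pos
  linear_combination newton_two

theorem powerSum_eq_neg_mul_coeff_sub_sum (s : Multiset R) {k : ℕ} (hk : 0 < k)
    (hks : k ≤ s.card) :
    powerSum s k = -(k * (s.map fun z ↦ X - C z).prod.coeff (s.card - k)) -
      ∑ i ∈ Finset.Ico 1 k,
        (s.map fun z ↦ X - C z).prod.coeff (s.card - i) * powerSum s (k - i) := by
  have coeff_eq {i : ℕ} (hi : i ≤ s.card) :
      (s.map fun z ↦ X - C z).prod.coeff (s.card - i) = (-1) ^ i * s.esymm i := by
    rw [s.prod_X_sub_C_coeff (Nat.sub_le _ _), Nat.sub_sub_self hi]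
  rw [powerSum_eq_mul_esymm_sub_sum s hk, coeff_eq hks]
  congr 1
  · ring
  · refine Finset.sum_congr rfl fun i hi ↦ ?_
    rw [coeff_eq ((Finset.mem_Ico.mp hi).2.le.trans hks)]

end Newton

section Tschirnhaus

variable {R : Type*} [CommSemiring R]

/-- The Tschirnhaus transform `∏ (Y + g(z))`, over the multiset `s` of roots `z` of a polynomial,
by the subsidiary equation `g(z) + y = 0`. -/
noncomputable def tschirnhausTransform (g : R[X]) (s : Multiset R) : R[X] :=
  (s.map fun z ↦ X + C (g.eval z)).prod

/-- The polynomial `X⁴ + dX³ + cX² + bX + a` of the quartic subsidiary equation. -/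
noncomputable def subsidiaryQuartic (a b c d : R) : R[X] :=
  X ^ 4 + C d * X ^ 3 + C c * X ^ 2 + C b * X + C a

theorem coeff_subsidiaryQuartic (a b c d : R) (k : ℕ) :
    (subsidiaryQuartic a b c d).coeff k =
      if k = 4 then 1 else if k = 3 then d else if k = 2 then c else
        if k = 1 then b else if k = 0 then a else 0 := by
  simp only [subsidiaryQuartic, coeff_add, coeff_C_mul, coeff_X_pow, coeff_X, coeff_C,
    mul_ite, mul_one, mul_zero]
  grind [add_zero, zero_add]

theorem natDegree_subsidiaryQuartic_lt (a b c d : R) :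
    (subsidiaryQuartic a b c d).natDegree < 5 := by
  rw [subsidiaryQuartic, Nat.lt_succ_iff]
  compute_degree

theorem sum_map_eval_subsidiaryQuartic (a b c d : R) (s : Multiset R) :
    (s.map fun z ↦ (subsidiaryQuartic a b c d).eval z).sum =
      powerSum s 4 + d * powerSum s 3 + c * powerSum s 2 + b * powerSum s 1 + a * s.card := by
  rw [sum_map_eval s (natDegree_subsidiaryQuartic_lt a b c d)]
  simp only [coeff_subsidiaryQuartic, ite_mul, one_mul, zero_mul, Finset.sum_range_succ,
    Finset.range_one, Finset.sum_singleton, OfNat.zero_ne_ofNat, ↓reduceIte, zero_ne_one,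
    powerSum_zero, OfNat.one_ne_ofNat, Nat.reduceEqDiff]
  ring

theorem sum_map_eval_subsidiaryQuartic_sq (a b c d : R) (s : Multiset R) :
    (s.map fun z ↦ (subsidiaryQuartic a b c d).eval z * (subsidiaryQuartic a b c d).eval z).sum =
      powerSum s 8 + 2 * d * powerSum s 7 + (d ^ 2 + 2 * c) * powerSum s 6 +
        2 * (b + c * d) * powerSum s 5 + (2 * a + 2 * b * d + c ^ 2) * powerSum s 4 +
        2 * (a * d + b * c) * powerSum s 3 + (2 * a * c + b ^ 2) * powerSum s 2 +
        2 * a * b * powerSum s 1 + a ^ 2 * s.card := by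
  have deg_lt := natDegree_subsidiaryQuartic_lt a b c d
  rw [sum_map_eval_mul s deg_lt deg_lt]
  simp only [coeff_subsidiaryQuartic, mul_ite, mul_one, ite_mul, one_mul, zero_mul, mul_zero,
    Finset.sum_range_succ, Finset.range_one, Finset.sum_singleton, OfNat.zero_ne_ofNat,
    ↓reduceIte, zero_ne_one, add_zero, OfNat.one_ne_ofNat, Nat.reduceEqDiff, powerSum_zero,
    zero_add, Nat.reduceAdd]
  ring

end Tschirnhaus

theorem two_mul_coeff_tschirnhausTransform {R : Type*} [CommRing R] (g : R[X])
    {s : Multiset R} {n : ℕ}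
    (hs : s.card = n + 2) :
    2 * (tschirnhausTransform g s).coeff n =
      (s.map fun z ↦ g.eval z).sum ^ 2 - (s.map fun z ↦ g.eval z * g.eval z).sum := by
  rw [tschirnhausTransform, Multiset.prod_X_add_C_coeff' s _ (by lia), hs, Nat.add_sub_cancel_left,
    two_mul_esymm_two, powerSum, Multiset.map_map]
  simp only [Function.comp_def, sq]

section PrincipalQuintic

section Semiring

variable {R : Type*} [CommSemiring R]

/-- The quintic `X⁵ + pX² + qX + r`, called principal because its terms of degree `4` and `3`
vanish. -/
noncomputable def principalQuintic (p q r : R) : R[X] :=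
  X ^ 5 + C p * X ^ 2 + C q * X + C r

theorem natDegree_principalQuintic [Nontrivial R] (p q r : R) :
    (principalQuintic p q r).natDegree = 5 := by
  rw [principalQuintic]
  compute_degree!

theorem coeff_principalQuintic (p q r : R) (k : ℕ) :
    (principalQuintic p q r).coeff k =
      if k = 5 then 1 else if k = 2 then p else if k = 1 then q else if k = 0 then r else 0 := by
  simp only [principalQuintic, coeff_add, coeff_C_mul, coeff_X_pow, coeff_X, coeff_C,
    mul_ite, mul_one, mul_zero]
  grind [add_zero, zero_add]

theorem monic_principalQuintic (p q r : R) : (principalQuintic p q r).Monic := by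
  rw [principalQuintic]
  monicity!

end Semiring

variable {R : Type*} [CommRing R] {p q r : R} {s : Multiset R}

theorem card_eq_five_of_prod_eq_principalQuintic [Nontrivial R]
    (hs : (s.map fun z ↦ X - C z).prod = principalQuintic p q r) : s.card = 5 := by
  rw [← natDegree_multiset_prod_X_sub_C_eq_card s, hs, natDegree_principalQuintic]

theorem powerSum_one_to_four_of_prod_eq_principalQuintic [Nontrivial R]
    (hs : (s.map fun z ↦ X - C z).prod = principalQuintic p q r) :
    powerSum s 1 = 0 ∧ powerSum s 2 = 0 ∧ powerSum s 3 = -3 * p ∧ powerSum s 4 = -4 * q := by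
  have hcard := card_eq_five_of_prod_eq_principalQuintic hs
  have newton {k : ℕ} (hk : 0 < k) (hk5 : k ≤ 5) :=
    powerSum_eq_neg_mul_coeff_sub_sum s hk (hk5.trans_eq hcard.symm)
  simp only [hs, hcard, coeff_principalQuintic] at newton
  have h1 : powerSum s 1 = 0 := by simp [newton]
  have h2 : powerSum s 2 = 0 := by simp [newton]
  have h3 : powerSum s 3 = -3 * p := by simp [newton, Finset.sum_Ico_succ_top]
  have h4 : powerSum s 4 = -4 * q := by simp [newton, Finset.sum_Ico_succ_top]
  exact ⟨h1, h2, h3, h4⟩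

theorem powerSum_add_five_of_prod_eq_principalQuintic
    (hs : (s.map fun z ↦ X - C z).prod = principalQuintic p q r) (k : ℕ) :
    powerSum s (k + 5) =
      -(p * powerSum s (k + 2) + q * powerSum s (k + 1) + r * powerSum s k) := by
  have root {z : R} (hz : z ∈ s) : (principalQuintic p q r).IsRoot z := by
    rw [← hs, IsRoot.def, eval_multiset_prod, Multiset.map_map]
    exact Multiset.prod_eq_zero (Multiset.mem_map.mpr ⟨z, hz, by simp⟩)
  have natDegree_lt : (principalQuintic p q r).natDegree < 6 := by
    rw [principalQuintic, Nat.lt_succ_iff]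
    compute_degree
  have recurrence := sum_coeff_mul_powerSum_add natDegree_lt (fun _ ↦ root) k
  simp only [coeff_principalQuintic, ite_mul, one_mul, zero_mul, Finset.sum_range_succ,
    Finset.range_one, Finset.sum_singleton, OfNat.zero_ne_ofNat, ↓reduceIte, zero_ne_one,
    add_zero, OfNat.one_ne_ofNat, Nat.reduceEqDiff, Nat.succ_ne_self, OfNat.ofNat_ne_one,
    OfNat.ofNat_ne_zero] at recurrence
  linear_combination recurrence

theorem powerSum_five_to_eight_of_prod_eq_principalQuintic [Nontrivial R]
    (hs : (s.map fun z ↦ X - C z).prod = principalQuintic p q r) :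
    powerSum s 5 = -5 * r ∧ powerSum s 6 = 3 * p ^ 2 ∧ powerSum s 7 = 7 * p * q ∧
      powerSum s 8 = 8 * p * r + 4 * q ^ 2 := by
  obtain ⟨h1, h2, h3, h4⟩ := powerSum_one_to_four_of_prod_eq_principalQuintic hs
  have h0 : powerSum s 0 = 5 := by
    rw [powerSum_zero, card_eq_five_of_prod_eq_principalQuintic hs, Nat.cast_ofNat]
  have recurrence := powerSum_add_five_of_prod_eq_principalQuintic hs
  have h5 : powerSum s 5 = -5 * r := by
    linear_combination recurrence 0 - p * h2 - q * h1 - r * h0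
  have h6 : powerSum s 6 = 3 * p ^ 2 := by
    linear_combination recurrence 1 - p * h3 - q * h2 - r * h1
  have h7 : powerSum s 7 = 7 * p * q := by
    linear_combination recurrence 2 - p * h4 - q * h3 - r * h2
  have h8 : powerSum s 8 = 8 * p * r + 4 * q ^ 2 := by
    linear_combination recurrence 3 - p * h5 - q * h4 - r * h3
  exact ⟨h5, h6, h7, h8⟩

end PrincipalQuintic

theorem bring_quintic_coeff_three_general {R : Type*} [CommRing R] {p q r a b c d : R}
    (two_regular : IsLeftRegular (2 : R)) (ha : 5 * a = 3 * p * d + 4 * q) {s : Multiset R}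
    (hs : (s.map fun z ↦ X - C z).prod = principalQuintic p q r) :
    5 * (tschirnhausTransform (subsidiaryQuartic a b c d) s).coeff 3 =
      15 * p * b * c + 20 * q * b * d + 25 * r * b + 10 * q * c ^ 2 +
        25 * r * c * d - 15 * p ^ 2 * c - 3 * p ^ 2 * d ^ 2 -
        23 * p * q * d - 2 * q ^ 2 - 20 * r * p := by
  nontriviality R
  have hcard := card_eq_five_of_prod_eq_principalQuintic hs
  obtain ⟨h1, h2, h3, h4⟩ := powerSum_one_to_four_of_prod_eq_principalQuintic hs
  obtain ⟨h5, h6, h7, h8⟩ := powerSum_five_to_eight_of_prod_eq_principalQuintic hs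
  have sum_eq_zero : (s.map fun z ↦ (subsidiaryQuartic a b c d).eval z).sum = 0 := by
    rw [sum_map_eval_subsidiaryQuartic, h1, h2, h3, h4, hcard]
    linear_combination ha
  have two_mul_coeff := two_mul_coeff_tschirnhausTransform (subsidiaryQuartic a b c d) hcard
  rw [sum_eq_zero, sum_map_eval_subsidiaryQuartic_sq, h1, h2, h3, h4, h5, h6, h7, h8, hcard]
    at two_mul_coeff
  refine two_regular ?_
  linear_combination 5 * two_mul_coeff + (3 * p * d + 4 * q - 5 * a) * ha

/-- Bring §X, equation E: for the quintic `X⁵ + pX² + qX + r` and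
`a = (3pd + 4q)/5`, five times the coefficient of `Y³` in the quartic
Tschirnhaus transform equals
`15pbc + 20qbd + 25rb + 10qc² + 25rcd − 15p²c − 3p²d² − 23pqd − 2q² − 20rp`. -/
theorem bring_quintic_coeff_three (p q r b c d : ℂ) (a : ℂ)
    (ha : a = (3 * p * d + 4 * q) / 5) (z₁ z₂ z₃ z₄ z₅ : ℂ)
    (hroots : (X ^ 5 + C p * X ^ 2 + C q * X + C r).roots =
      {z₁, z₂, z₃, z₄, z₅}) :
    5 * (bringQuinticTransform a b c d z₁ z₂ z₃ z₄ z₅).coeff 3 =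
      15 * p * b * c + 20 * q * b * d + 25 * r * b + 10 * q * c ^ 2 +
        25 * r * c * d - 15 * p ^ 2 * c - 3 * p ^ 2 * d ^ 2 -
        23 * p * q * d - 2 * q ^ 2 - 20 * r * p := by
  have hprod : (({z₁, z₂, z₃, z₄, z₅} : Multiset ℂ).map fun z ↦ X - C z).prod =
      principalQuintic p q r := by
    rw [← hroots]
    exact ((IsAlgClosed.splits _).eq_prod_roots_of_monic (monic_principalQuintic p q r)).symm
  have htransform : bringQuinticTransform a b c d z₁ z₂ z₃ z₄ z₅ =
      tschirnhausTransform (subsidiaryQuartic a b c d) {z₁, z₂, z₃, z₄, z₅} := by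
    simp [bringQuinticTransform, tschirnhausTransform, subsidiaryQuartic, mul_assoc]
  rw [htransform]
  exact bring_quintic_coeff_three_general (IsUnit.mk0 2 two_ne_zero).isRegular.left
    (by rw [ha]; ring) hprod
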